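/- Let f : ℝ^d → ℝ be L-smooth, let μ > 0, and let f_μ be its Gaussian smoothing. Then for all x, x̂ ∈ ℝ^d, ‖∇f_μ(x̂)‖² ≤ μ² L² (d + 3)³ + 4 L² ‖x̂ − x‖² + 2 ‖∇f(x)‖². -/

import Mathlib

open MeasureTheory ProbabilityTheory

/-- The standard multivariate Gaussian distribution `N(0, I_d)` on `ℝ^d`. -/
noncomputable def stdGaussian (d : ℕ) : Measure (EuclideanSpace ℝ (Fin d)) :=
  (Measure.pi fun _ : Fin d => gaussianReal 0 1).map
    (MeasurableEquiv.toLp 2 (Fin d → ℝ))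

theorem stdGaussian_eq_probabilityTheory (d : ℕ) :
    _root_.stdGaussian d = ProbabilityTheory.stdGaussian (EuclideanSpace ℝ (Fin d)) :=
  map_pi_eq_stdGaussian

instance isGaussian_stdGaussian (d : ℕ) : IsGaussian (_root_.stdGaussian d) := by
  rw [stdGaussian_eq_probabilityTheory]
  infer_instance

theorem integrable_norm_stdGaussian (d : ℕ) :
    Integrable (fun u => ‖u‖) (_root_.stdGaussian d) :=
  (IsGaussian.integrable_id (μ := _root_.stdGaussian d)).norm

theorem integrable_norm_sq_stdGaussian (d : ℕ) :
    Integrable (fun u => ‖u‖ ^ 2) (_root_.stdGaussian d) :=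
  (IsGaussian.memLp_two_id (μ := _root_.stdGaussian d)).integrable_norm_pow two_ne_zero

theorem integral_coord_sq_pi_gaussianReal {d : ℕ} (i : Fin d) :
    ∫ v : Fin d → ℝ, v i ^ 2 ∂(Measure.pi fun _ : Fin d => gaussianReal 0 1) = 1 := by
  have hvar := variance_eq_integral (X := id) (μ := gaussianReal 0 1) measurable_id.aemeasurable
  simp only [variance_id_gaussianReal, id_eq, integral_id_gaussianReal, sub_zero,
    NNReal.coe_one] at hvar
  rw [integral_comp_eval (μ := fun _ : Fin d => gaussianReal 0 1) (i := i)
    (f := fun t : ℝ => t ^ 2) (by fun_prop), ← hvar]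

theorem integral_norm_sq_stdGaussian (d : ℕ) :
    ∫ u, ‖u‖ ^ 2 ∂(_root_.stdGaussian d) = d := by
  unfold _root_.stdGaussian
  rw [integral_map_equiv]
  simp only [MeasurableEquiv.coe_toLp, EuclideanSpace.real_norm_sq_eq]
  rw [integral_finsetSum]
  · simp [integral_coord_sq_pi_gaussianReal]
  · intro i _
    refine Integrable.of_integral_ne_zero ?_
    simp [integral_coord_sq_pi_gaussianReal]

theorem integral_norm_stdGaussian_le (d : ℕ) :
    ∫ u, ‖u‖ ∂(_root_.stdGaussian d) ≤ (1 + d) / 2 := by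
  have hsq := integrable_norm_sq_stdGaussian d
  calc ∫ u, ‖u‖ ∂(_root_.stdGaussian d)
      ≤ ∫ u, (1 + ‖u‖ ^ 2) / 2 ∂(_root_.stdGaussian d) := by
        refine integral_mono (integrable_norm_stdGaussian d)
          (((integrable_const _).add hsq).div_const 2) fun u => ?_
        change ‖u‖ ≤ (1 + ‖u‖ ^ 2) / 2
        nlinarith [sq_nonneg (‖u‖ - 1)]
    _ = (1 + d) / 2 := by
        rw [integral_div, integral_add (integrable_const _) hsq, integral_norm_sq_stdGaussian]
        simp

section Smooth

variable {E : Type*} [NormedAddCommGroup E] [InnerProductSpace ℝ E] [CompleteSpace E]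

theorem norm_gradient_eq_norm_fderiv (f : E → ℝ) (x : E) : ‖gradient f x‖ = ‖fderiv ℝ f x‖ := by
  simp [gradient]

theorem norm_fderiv_le_of_gradient_lipschitz {f : E → ℝ} {K : ℝ}
    (hlip : ∀ x y, ‖gradient f x - gradient f y‖ ≤ K * ‖x - y‖) (x y : E) :
    ‖fderiv ℝ f y‖ ≤ ‖gradient f x‖ + K * ‖y - x‖ := by
  rw [← norm_gradient_eq_norm_fderiv]
  linarith [norm_le_norm_add_norm_sub (gradient f x) (gradient f y), hlip y x,
    norm_sub_rev (gradient f x) (gradient f y)]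

theorem continuous_fderiv_of_gradient_lipschitz {f : E → ℝ} {K : ℝ}
    (hlip : ∀ x y, ‖gradient f x - gradient f y‖ ≤ K * ‖x - y‖) : Continuous (fderiv ℝ f) := by
  have hg : Continuous (gradient f) :=
    (LipschitzWith.of_dist_le' fun x y => by simpa [dist_eq_norm] using hlip x y).continuous
  have : fderiv ℝ f = fun x => InnerProductSpace.toDual ℝ E (gradient f x) := by
    ext1 x
    simp [gradient]
  rw [this]
  exact (InnerProductSpace.toDual ℝ E).continuous.comp hg

theorem abs_sub_le_of_gradient_lipschitz {f : E → ℝ} {K : ℝ} (hK : 0 ≤ K)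
    (hdiff : Differentiable ℝ f)
    (hlip : ∀ x y, ‖gradient f x - gradient f y‖ ≤ K * ‖x - y‖) (x v : E) :
    |f (x + v) - f x| ≤ ‖gradient f x‖ * ‖v‖ + K * ‖v‖ ^ 2 := by
  have h := (convex_closedBall x ‖v‖).norm_image_sub_le_of_norm_fderiv_le (𝕜 := ℝ) (f := f)
    (C := ‖gradient f x‖ + K * ‖v‖) (x := x) (y := x + v) (fun y _ => hdiff y)
    (fun y hy => (norm_fderiv_le_of_gradient_lipschitz hlip x y).trans (by
      rw [mem_closedBall_iff_norm] at hy
      gcongr)) (by simp) (by simp)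
  rw [Real.norm_eq_abs, add_sub_cancel_left] at h
  linarith

end Smooth

section Smoothing

variable {d : ℕ} {K μ : ℝ} {f : EuclideanSpace ℝ (Fin d) → ℝ}

theorem integrable_gaussian_smoothing (hK : 0 ≤ K) (hdiff : Differentiable ℝ f)
    (hlip : ∀ x y, ‖gradient f x - gradient f y‖ ≤ K * ‖x - y‖)
    (x : EuclideanSpace ℝ (Fin d)) :
    Integrable (fun u => f (x + μ • u)) (_root_.stdGaussian d) := by
  have hbound : Integrable (fun u : EuclideanSpace ℝ (Fin d) =>
      |f x| + (‖gradient f x‖ * |μ| * ‖u‖ + K * μ ^ 2 * ‖u‖ ^ 2)) (_root_.stdGaussian d) :=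
    (integrable_const _).add (((integrable_norm_stdGaussian d).const_mul _).add
      ((integrable_norm_sq_stdGaussian d).const_mul _))
  have hf : Continuous f := hdiff.continuous
  refine hbound.mono' (by fun_prop) (.of_forall fun u => ?_)
  have h := abs_sub_le_of_gradient_lipschitz hK hdiff hlip x (μ • u)
  rw [norm_smul, Real.norm_eq_abs, mul_pow, sq_abs] at h
  rw [Real.norm_eq_abs]
  linarith [abs_sub_abs_le_abs_sub (f (x + μ • u)) (f x)]

theorem hasFDerivAt_gaussian_smoothing (hK : 0 ≤ K) (hdiff : Differentiable ℝ f)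
    (hlip : ∀ x y, ‖gradient f x - gradient f y‖ ≤ K * ‖x - y‖)
    (x : EuclideanSpace ℝ (Fin d)) :
    HasFDerivAt (fun y => ∫ u, f (y + μ • u) ∂(_root_.stdGaussian d))
      (∫ u, fderiv ℝ f (x + μ • u) ∂(_root_.stdGaussian d)) x := by
  have hf : Continuous f := hdiff.continuous
  have hf' : Continuous (fderiv ℝ f) := continuous_fderiv_of_gradient_lipschitz hlip
  refine hasFDerivAt_integral_of_dominated_of_fderiv_le (μ := _root_.stdGaussian d)
    (F := fun y u => f (y + μ • u)) (F' := fun y u => fderiv ℝ f (y + μ • u))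
    (s := Metric.ball x 1)
    (bound := fun u => ‖gradient f x‖ + K * (1 + |μ| * ‖u‖)) (Metric.ball_mem_nhds x one_pos)
    (.of_forall fun y => by fun_prop) (integrable_gaussian_smoothing hK hdiff hlip x)
    (by fun_prop) (.of_forall fun u y hy => ?_) ?_ (.of_forall fun u y _ => ?_)
  · refine (norm_fderiv_le_of_gradient_lipschitz hlip x _).trans ?_
    rw [mem_ball_iff_norm] at hy
    gcongr
    calc ‖y + μ • u - x‖ = ‖(y - x) + μ • u‖ := by congr 1; abel
      _ ≤ ‖y - x‖ + ‖μ • u‖ := norm_add_le _ _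
      _ ≤ 1 + |μ| * ‖u‖ := by
        rw [norm_smul, Real.norm_eq_abs]
        gcongr
  · exact (integrable_const _).add (((integrable_const _).add
      ((integrable_norm_stdGaussian d).const_mul _)).const_mul _)
  · exact (hasFDerivAt_comp_add_right (μ • u)).2 (hdiff _).hasFDerivAt

theorem norm_gradient_gaussian_smoothing_le (hK : 0 ≤ K) (hdiff : Differentiable ℝ f)
    (hlip : ∀ x y, ‖gradient f x - gradient f y‖ ≤ K * ‖x - y‖)
    (x xhat : EuclideanSpace ℝ (Fin d)) :
    ‖gradient (fun y => ∫ u, f (y + μ • u) ∂(_root_.stdGaussian d)) xhat‖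
      ≤ ‖gradient f x‖ + K * (‖xhat - x‖ + |μ| * ((1 + d) / 2)) := by
  rw [norm_gradient_eq_norm_fderiv, (hasFDerivAt_gaussian_smoothing hK hdiff hlip xhat).fderiv]
  have hnorm := (integrable_norm_stdGaussian d).const_mul |μ|
  have hinner : Integrable (fun u : EuclideanSpace ℝ (Fin d) =>
      K * (‖xhat - x‖ + |μ| * ‖u‖)) (_root_.stdGaussian d) :=
    ((integrable_const _).add hnorm).const_mul K
  calc ‖∫ u, fderiv ℝ f (xhat + μ • u) ∂(_root_.stdGaussian d)‖
      ≤ ∫ u, (‖gradient f x‖ + K * (‖xhat - x‖ + |μ| * ‖u‖)) ∂(_root_.stdGaussian d) := by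
        refine norm_integral_le_of_norm_le ((integrable_const _).add hinner)
          (.of_forall fun u => (norm_fderiv_le_of_gradient_lipschitz hlip x _).trans ?_)
        gcongr
        calc ‖xhat + μ • u - x‖ = ‖(xhat - x) + μ • u‖ := by congr 1; abel
          _ ≤ ‖xhat - x‖ + ‖μ • u‖ := norm_add_le _ _
          _ = ‖xhat - x‖ + |μ| * ‖u‖ := by rw [norm_smul, Real.norm_eq_abs]
    _ = ‖gradient f x‖ + K * (‖xhat - x‖ + |μ| * ∫ u, ‖u‖ ∂(_root_.stdGaussian d)) := by
        rw [integral_add (integrable_const _) hinner, integral_const_mul,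
          integral_add (integrable_const _) hnorm, integral_const_mul]
        simp
    _ ≤ _ := by
        gcongr
        exact integral_norm_stdGaussian_le d

end Smoothing

/-- Delayed-iterate norm bound for Gaussian smoothing:
`‖∇f_μ(x̂)‖² ≤ μ² L² (d + 3)³ + 4 L² ‖x̂ − x‖² + 2 ‖∇f(x)‖²`. -/
theorem gaussian_smoothing_delayed_gradient_norm_bound
    (d : ℕ) (L μ : ℝ) (hμ : 0 < μ)
    (f : EuclideanSpace ℝ (Fin d) → ℝ)
    (hdiff : Differentiable ℝ f)
    (hlip : ∀ x y, ‖gradient f x - gradient f y‖ ≤ L * ‖x - y‖)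
    (fμ : EuclideanSpace ℝ (Fin d) → ℝ)
    (hfμ : ∀ x, fμ x = ∫ u, f (x + μ • u) ∂(stdGaussian d))
    (x xhat : EuclideanSpace ℝ (Fin d)) :
    ‖gradient fμ xhat‖ ^ 2
      ≤ μ ^ 2 * L ^ 2 * ((d : ℝ) + 3) ^ 3 + 4 * L ^ 2 * ‖xhat - x‖ ^ 2
        + 2 * ‖gradient f x‖ ^ 2 := by
  have hlip_abs : ∀ x y, ‖gradient f x - gradient f y‖ ≤ |L| * ‖x - y‖ := fun x y =>
    (hlip x y).trans (by gcongr; exact le_abs_self L)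
  have h := norm_gradient_gaussian_smoothing_le (μ := μ) (abs_nonneg L) hdiff hlip_abs x xhat
  rw [← funext hfμ, abs_of_pos hμ] at h
  set g := ‖gradient f x‖
  set a := ‖xhat - x‖
  have hdim : (1 + (d : ℝ)) ^ 2 ≤ (d + 3) ^ 3 := by
    have hd : (0 : ℝ) ≤ d := d.cast_nonneg
    nlinarith [pow_nonneg hd 2, pow_nonneg hd 3]
  calc ‖gradient fμ xhat‖ ^ 2
      ≤ (g + |L| * (a + μ * ((1 + d) / 2))) ^ 2 := by gcongr
    _ ≤ 2 * (g ^ 2 + (|L| * (a + μ * ((1 + d) / 2))) ^ 2) := add_sq_le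
    _ = 2 * g ^ 2 + 2 * L ^ 2 * (a + μ * ((1 + d) / 2)) ^ 2 := by rw [mul_pow, sq_abs]; ring
    _ ≤ 2 * g ^ 2 + 2 * L ^ 2 * (2 * (a ^ 2 + (μ * ((1 + d) / 2)) ^ 2)) := by
        gcongr
        exact add_sq_le
    _ = μ ^ 2 * L ^ 2 * (1 + d) ^ 2 + 4 * L ^ 2 * a ^ 2 + 2 * g ^ 2 := by ring
    _ ≤ _ := by gcongr
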